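/- arXiv:1202.6571 — 2 statements merged into one kernel-verified Lean document; each statement's English description precedes it below -/
import Mathlib

section
/- Let r ≥ 1 be an integer and C ≥ 0 a real number. Suppose given real numbers l_i^n for i ∈ {1,…,r} and n ∈ ℕ satisfying: (i) for every n, l_1^n ≥ l_2^n ≥ … ≥ l_r^n; (ii) for every n, l_1^n + … + l_r^n = 0; (iii) l_1^0 = … = l_r^0 = 0; (iv) for every i and n, l_i^n − C ≤ l_i^{n+1} ≤ l_i^n + C; (v) for every i ∈ {1,…,r−1} and every n, if l_i^n − l_{i+1}^n ≥ C then l_1^{n+1} + … + l_i^{n+1} ≤ l_1^n + … + l_i^n. Then |l_i^n| ≤ (3/2)·C·(r−1) for every i ∈ {1,…,r} and every n ∈ ℕ. -/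
/-!
Let `S n i = l n 1 + ⋯ + l n i` be the polygon whose slopes are the `l n i`, and let
`P i = (3/2) C i (r - i)` be the parabola through `(0, 0)` and `(r, 0)` with constant second
difference `2 P i - P (i-1) - P (i+1) = 3C`. By induction on `n`, the polygon stays below the
parabola: if `S (n+1) - P` had a positive maximum, it would be attained at an interior index `i`,
where comparing second differences gives `l (n+1) i - l (n+1) (i+1) ≥ 3C`. One step changes this
gap by at most `2C`, so the gap at time `n` is at least `C`, whence
`S (n+1) i ≤ S n i ≤ P i`, a contradiction.

Evaluating at `i = 1` and `i = r - 1` bounds the extreme slopes `l n 1` and `l n r`, and the other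
slopes lie between these.
-/

/-- Maximum principle: a positive value of `D` on `{0, …, r}`, when `D` is nonpositive at both ends,
forces a positive interior value which is at least as large as its two neighbours. -/
lemma exists_interior_max (r : ℕ) (D : ℕ → ℝ) (h0 : D 0 ≤ 0) (hr : D r ≤ 0)
    (k : ℕ) (hk : k ≤ r) (hpos : 0 < D k) :
    ∃ i, i + 2 ≤ r ∧ 0 < D (i + 1) ∧ D i ≤ D (i + 1) ∧ D (i + 2) ≤ D (i + 1) := by
  obtain ⟨m, hm, hmax⟩ := Finset.exists_max_image (Finset.range (r + 1)) D ⟨0, by simp⟩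
  have hmr : m ≤ r := by simpa [Nat.lt_succ_iff] using hm
  have hDm : 0 < D m := hpos.trans_le (hmax k (by simp; omega))
  have hm0 : m ≠ 0 := by rintro rfl; linarith
  have hmr' : m ≠ r := by rintro rfl; linarith
  obtain ⟨i, rfl⟩ := Nat.exists_eq_succ_of_ne_zero hm0
  exact ⟨i, by omega, hDm, hmax i (by simp; omega), hmax (i + 2) (by simp; omega)⟩

/-- Lemma 4.21: a combinatorial statement about slopes of "polygons of invariants". -/
theorem stmt0 (r : ℕ) (hr : 1 ≤ r) (C : ℝ) (hC : 0 ≤ C) (l : ℕ → ℕ → ℝ)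
    (h_mono : ∀ n i : ℕ, 1 ≤ i → i + 1 ≤ r → l n (i + 1) ≤ l n i)
    (h_sum : ∀ n : ℕ, ∑ i ∈ Finset.Icc 1 r, l n i = 0)
    (h_zero : ∀ i ∈ Finset.Icc 1 r, l 0 i = 0)
    (h_step : ∀ n : ℕ, ∀ i ∈ Finset.Icc 1 r,
      l n i - C ≤ l (n + 1) i ∧ l (n + 1) i ≤ l n i + C)
    (h_break : ∀ n i : ℕ, 1 ≤ i → i + 1 ≤ r → C ≤ l n i - l n (i + 1) →
      ∑ j ∈ Finset.Icc 1 i, l (n + 1) j ≤ ∑ j ∈ Finset.Icc 1 i, l n j) :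
    ∀ n : ℕ, ∀ i ∈ Finset.Icc 1 r, |l n i| ≤ 3 / 2 * C * ((r : ℝ) - 1) := by
  set S : ℕ → ℕ → ℝ := fun n i => ∑ j ∈ Finset.Icc 1 i, l n j with hS
  have hS0 : ∀ n, S n 0 = 0 := fun n => by simp [hS]
  have hSr : ∀ n, S n r = 0 := h_sum
  have hSs : ∀ n i, S n (i + 1) = S n i + l n (i + 1) := fun n i =>
    Finset.sum_Icc_succ_top (by omega) _
  have key : ∀ n i, i ≤ r → S n i ≤ 3 / 2 * C * i * ((r : ℝ) - i) := by
    intro n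
    induction n with
    | zero =>
      intro i hi
      have hzero : S 0 i = 0 := Finset.sum_eq_zero fun j hj => h_zero j (by
        simp only [Finset.mem_Icc] at hj ⊢; omega)
      have hir : (0 : ℝ) ≤ (r : ℝ) - i := sub_nonneg.2 (by exact_mod_cast hi)
      rw [hzero]
      positivity
    | succ n ih =>
      intro k hk
      by_contra! hlt
      obtain ⟨i, hi, hpos, hleft, hright⟩ := exists_interior_max r
        (fun i => S (n + 1) i - 3 / 2 * C * i * ((r : ℝ) - i))
        (by simp [hS0]) (by simp [hSr]) k hk (by simpa using hlt)
      have e1 := hSs (n + 1) i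
      have e2 := hSs (n + 1) (i + 1)
      have s1 := (h_step n (i + 1) (by simp only [Finset.mem_Icc]; omega)).2
      have s2 := (h_step n (i + 2) (by simp only [Finset.mem_Icc]; omega)).1
      have hih := ih (i + 1) (by omega)
      push_cast at hpos hleft hright hih
      have hgap : 3 * C ≤ l (n + 1) (i + 1) - l (n + 1) (i + 2) := by
        rw [e2] at hright
        rw [e1] at hleft hright
        linarith
      have hb : S (n + 1) (i + 1) ≤ S n (i + 1) :=
        h_break n (i + 1) (by omega) hi (by linarith)
      linarith
  intro n i hi
  rw [Finset.mem_Icc] at hi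
  have hanti : AntitoneOn (l n) (Set.Icc 1 r) := by
    refine antitoneOn_of_succ_le Set.ordConnected_Icc fun a _ ha ha' => ?_
    exact h_mono n a ha.1 ha'.2
  have hfirst : l n 1 ≤ 3 / 2 * C * ((r : ℝ) - 1) := by
    have h1 := key n 1 hr
    simpa [hS] using h1
  have hlast : -(3 / 2 * C * ((r : ℝ) - 1)) ≤ l n r := by
    obtain ⟨m, rfl⟩ := Nat.exists_eq_add_of_le' hr
    have h1 := key n m (by omega)
    have h2 := hSs n m
    rw [hSr] at h2
    push_cast at h1 ⊢
    linarith
  exact abs_le.2 ⟨hlast.trans (hanti hi ⟨hr, le_rfl⟩ hi.2),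
    (hanti ⟨le_rfl, hr⟩ hi hi.1).trans hfirst⟩
end

section
/- The localization 𝔖[1/p] of 𝔖 = W⟦u⟧ away from p is a principal ideal domain. -/
/-!
Let `A` be a complete discrete valuation ring with uniformizer `π`; for the theorem `A = W(k)` and
`π = p`. Every nonzero power series over `A` is a power of `π` times a series that is nonzero
modulo `π` (`exists_eq_pow_mul_residue_ne_zero`). The order of the residual series makes
`A⟦X⟧[1/π]` behave like a Euclidean domain: in a nonzero ideal `I`, choose `g ∈ A⟦X⟧` nonzero modulo
`π` with residual order `n` minimal. Weierstrass division writes any `f ∈ A⟦X⟧` lying in `I` as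
`g * q + r` with `r` a polynomial of degree `< n`. If `r ≠ 0`, then removing the powers of `π` from
`r` gives an element of `I` of residual order `< n`, which is impossible. Hence `I = (g)`.
-/

open PowerSeries IsLocalRing

section CompleteDVR

variable {A : Type*} [CommRing A] [IsDomain A] [IsDiscreteValuationRing A] {π : A}

lemma C_dvd_of_map_residue_eq_zero (hπ : Irreducible π) {g : A⟦X⟧}
    (hg : g.map (residue A) = 0) : C π ∣ g := by
  have h (i : ℕ) : ∃ b, coeff i g = π * b := by
    have h1 : residue A (coeff i g) = 0 := by rw [← coeff_map, hg, map_zero]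
    rw [residue_eq_zero_iff, hπ.maximalIdeal_eq, Ideal.mem_span_singleton] at h1
    exact h1
  choose b hb using h
  exact ⟨PowerSeries.mk b, by ext i; simp [hb]⟩

lemma exists_eq_pow_mul_residue_ne_zero (hπ : Irreducible π) {f : A⟦X⟧} (hf : f ≠ 0) :
    ∃ (m : ℕ) (g : A⟦X⟧), f = C π ^ m * g ∧ g.map (residue A) ≠ 0 := by
  have hu : ¬ IsUnit (C π : A⟦X⟧) := fun h => hπ.not_isUnit (by
    simpa using h.map (constantCoeff (R := A)))
  obtain ⟨g, hg, hnd⟩ :=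
    (FiniteMultiplicity.of_not_isUnit hu hf).exists_eq_pow_mul_and_not_dvd
  exact ⟨_, g, hg, fun h => hnd (C_dvd_of_map_residue_eq_zero hπ h)⟩

/-- The residual order of the part prime to `π` of a nonzero polynomial of degree `< n` is `< n`:
dividing by powers of `π` creates no new coefficients. -/
lemma order_map_residue_lt (hπ : Irreducible π) {r : Polynomial A} {n m : ℕ} {g : A⟦X⟧}
    (hr : r.degree < n) (h : (r : A⟦X⟧) = C π ^ m * g) (hg : g.map (residue A) ≠ 0) :
    (g.map (residue A)).order.toNat < n := by
  by_contra! hn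
  have h0 : coeff (g.map (residue A)).order.toNat g = 0 := by
    have h1 := congrArg (coeff (g.map (residue A)).order.toNat) h
    rw [← map_pow, coeff_C_mul, Polynomial.coeff_coe,
      Polynomial.coeff_eq_zero_of_degree_lt (hr.trans_le (by exact_mod_cast hn))] at h1
    exact (mul_eq_zero.mp h1.symm).resolve_left (pow_ne_zero _ hπ.ne_zero)
  apply coeff_order hg
  rw [coeff_map, h0, map_zero]

theorem isPrincipalIdealRing_away_C [IsAdicComplete (maximalIdeal A) A] (hπ : Irreducible π)
    (S : Type*) [CommRing S] [Algebra A⟦X⟧ S] [IsLocalization.Away (C π : A⟦X⟧) S] :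
    IsPrincipalIdealRing S := by
  have hu : IsUnit (algebraMap A⟦X⟧ S (C π)) := IsLocalization.Away.algebraMap_isUnit _
  refine ⟨fun I => ?_⟩
  set J : Ideal A⟦X⟧ := I.comap (algebraMap A⟦X⟧ S) with hJ
  have hIJ : J.map (algebraMap A⟦X⟧ S) = I :=
    IsLocalization.map_under (Submonoid.powers (C π : A⟦X⟧)) S I
  -- `J` is `π`-saturated, because `π` is invertible in `S`.
  have hsat {m : ℕ} {g : A⟦X⟧} (h : C π ^ m * g ∈ J) : g ∈ J := by
    rw [hJ, Ideal.mem_comap, map_mul, map_pow] at h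
    exact (Ideal.unit_mul_mem_iff_mem I (hu.pow m)).mp h
  by_cases hbot : J = ⊥
  · rw [← hIJ, hbot, Ideal.map_bot]
    exact bot_isPrincipal
  obtain ⟨f₀, hf₀, hf₀0⟩ := Submodule.exists_mem_ne_zero_of_ne_bot hbot
  have hex : ∃ n, ∃ g ∈ J, g.map (residue A) ≠ 0 ∧ (g.map (residue A)).order.toNat = n := by
    obtain ⟨m, g, rfl, hg⟩ := exists_eq_pow_mul_residue_ne_zero hπ hf₀0
    exact ⟨_, g, hsat hf₀, hg, rfl⟩
  classical
  obtain ⟨g, hgJ, hg, hgn⟩ := Nat.find_spec hex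
  have hJg : J = Ideal.span {g} := by
    refine le_antisymm (fun f hf => ?_) (by simpa [Ideal.span_le] using hgJ)
    obtain ⟨q, r, H⟩ := exists_isWeierstrassDivision f hg
    have hdeg := H.degree_lt
    have heq := H.eq_mul_add
    have hr : (r : A⟦X⟧) ∈ J := by
      rw [eq_sub_iff_add_eq'.mpr heq.symm]
      exact J.sub_mem hf (J.mul_mem_right _ hgJ)
    by_cases hr0 : (r : A⟦X⟧) = 0
    · rw [heq, hr0, add_zero]
      exact Ideal.mul_mem_right _ _ (Ideal.mem_span_singleton_self g)
    · obtain ⟨m, g', h', hg'⟩ := exists_eq_pow_mul_residue_ne_zero hπ hr0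
      have hlt := order_map_residue_lt hπ hdeg h' hg'
      exact (Nat.find_min hex (hgn ▸ hlt) ⟨g', hsat (h' ▸ hr), hg', rfl⟩).elim
  rw [← hIJ, hJg, Ideal.map_span, Set.image_singleton]
  exact ⟨⟨_, rfl⟩⟩

end CompleteDVR

/-- Lemma 4.17: `𝔖[1/p]` is a principal ideal domain, where `𝔖 = W(k)⟦u⟧`. -/
theorem stmt1 (p : ℕ) [Fact p.Prime] (k : Type*) [Field k] [CharP k p] [PerfectRing k p] :
    IsDomain (Localization.Away (p : PowerSeries (WittVector p k))) ∧
      IsPrincipalIdealRing (Localization.Away (p : PowerSeries (WittVector p k))) := by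
  have hp : Irreducible (p : WittVector p k) := WittVector.irreducible p
  have hC : (p : PowerSeries (WittVector p k)) = C (p : WittVector p k) := (map_natCast C p).symm
  have hp0 : (p : PowerSeries (WittVector p k)) ≠ 0 := by
    rw [hC]
    exact (map_ne_zero_iff _ C_injective).mpr hp.ne_zero
  have : IsAdicComplete (maximalIdeal (WittVector p k)) (WittVector p k) := by
    rw [hp.maximalIdeal_eq]
    infer_instance
  refine ⟨IsLocalization.isDomain_localization (powers_le_nonZeroDivisors_of_noZeroDivisors hp0), ?_⟩
  rw [hC]
  exact isPrincipalIdealRing_away_C hp _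
end
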